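/- arXiv:2511.06628 — 3 statements merged into one kernel-verified Lean document; each statement's English description precedes it below -/
import Mathlib

section
/- Let 𝒦 ⊆ ℝⁿ be a nonempty set closed under addition, and let ℓ : 𝒦 → ℝ be strictly subadditive, i.e. ℓ(ξ + ξ') < ℓ(ξ) + ℓ(ξ') for all ξ, ξ' ∈ 𝒦. Let V : ℝⁿ → ℝ, let x ∈ ℝⁿ and ξ̂ ∈ 𝒦 be such that V(x) = V(x + ξ̂) + ℓ(ξ̂) and V(x) ≤ V(x + ζ) + ℓ(ζ) for every ζ ∈ 𝒦 (i.e. the intervention infimum at x equals V(x) and is attained at ξ̂). Then for every ξ̃ ∈ 𝒦 one has the strict inequality V(x + ξ̂) < V(x + ξ̂ + ξ̃) + ℓ(ξ̃). -/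
theorem no_second_immediate_impulse_general {E R : Type*} [AddSemigroup E]
    [AddCommMonoid R] [PartialOrder R] [IsOrderedCancelAddMonoid R]
    {𝒦 : AddSubsemigroup E} {ℓ V : E → R} {x ξhat : E}
    (hsub : ∀ ξ ∈ 𝒦, ∀ ξ' ∈ 𝒦, ℓ (ξ + ξ') < ℓ ξ + ℓ ξ') (hξhat : ξhat ∈ 𝒦)
    (hmin : IsMinOn (fun ζ ↦ V (x + ζ) + ℓ ζ) 𝒦 ξhat) :
    ∀ ξtil ∈ 𝒦, V (x + ξhat) < V (x + ξhat + ξtil) + ℓ ξtil := by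
  intro ξtil hξtil
  refine lt_of_add_lt_add_right (a := ℓ ξhat) ?_
  calc
    V (x + ξhat) + ℓ ξhat
        ≤ V (x + (ξhat + ξtil)) + ℓ (ξhat + ξtil) := hmin (𝒦.add_mem hξhat hξtil)
    _ < V (x + (ξhat + ξtil)) + (ℓ ξhat + ℓ ξtil) := by
        gcongr
        exact hsub ξhat hξhat ξtil hξtil
    _ = V (x + ξhat + ξtil) + ℓ ξtil + ℓ ξhat := by
        rw [← add_assoc x, add_comm (ℓ ξhat), ← add_assoc]

/-- Pointwise form of Proposition 3.2: if the intervention infimum at `x` equals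
`V x` and is attained at `ξ̂`, then after the impulse `ξ̂` no further immediate
impulse can be optimal (strict inequality). -/
theorem no_second_immediate_impulse
    {n : ℕ} (𝒦 : Set (Fin n → ℝ)) (h𝒦 : 𝒦.Nonempty)
    (hadd : ∀ a ∈ 𝒦, ∀ b ∈ 𝒦, a + b ∈ 𝒦)
    (ℓ : (Fin n → ℝ) → ℝ)
    (hsub : ∀ ξ ∈ 𝒦, ∀ ξ' ∈ 𝒦, ℓ (ξ + ξ') < ℓ ξ + ℓ ξ')
    (V : (Fin n → ℝ) → ℝ) (x : Fin n → ℝ)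
    (ξhat : Fin n → ℝ) (hξhat : ξhat ∈ 𝒦)
    (heq : V x = V (x + ξhat) + ℓ ξhat)
    (hopt : ∀ ζ ∈ 𝒦, V x ≤ V (x + ζ) + ℓ ζ) :
    ∀ ξtil ∈ 𝒦, V (x + ξhat) < V (x + ξhat + ξtil) + ℓ ξtil :=
  no_second_immediate_impulse_general (𝒦 := ⟨𝒦, fun ha hb ↦ hadd _ ha _ hb⟩)
    hsub hξhat (isMinOn_iff.mpr fun ζ hζ ↦ heq.symm.trans_le (hopt ζ hζ))
end

section
/- Let 𝒦 ⊆ ℝⁿ be a nonempty set closed under addition, and let ℓ : 𝒦 → ℝ be strictly subadditive, i.e. ℓ(ξ + ξ') < ℓ(ξ) + ℓ(ξ') for all ξ, ξ' ∈ 𝒦. Let V : ℝⁿ → ℝ, define the intervention operator N[V](y) = inf_{ξ ∈ 𝒦} (V(y + ξ) + ℓ(ξ)) (infimum in ℝ of the set {V(y + ξ) + ℓ(ξ) : ξ ∈ 𝒦}, assumed bounded below). Suppose x ∈ ℝⁿ and ξ̂ ∈ 𝒦 satisfy V(x) = V(x + ξ̂) + ℓ(ξ̂) and V(x) ≤ V(x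 + ζ) + ℓ(ζ) for every ζ ∈ 𝒦, and suppose the infimum defining N[V](x + ξ̂) is attained at some ξ̃ ∈ 𝒦, i.e. N[V](x + ξ̂) = V(x + ξ̂ + ξ̃) + ℓ(ξ̃). Then V(x + ξ̂) < N[V](x + ξ̂). -/
/-!
An impulse `ζ` made right after `ξ` leads to the same state as the single impulse `ξ + ζ`, which
is strictly cheaper. If `ξ` is optimal at `x`, then `ξ + ζ` does not beat `ξ`, so the two-step
strategy is strictly worse than `ξ` alone; cancelling `ℓ ξ` shows that no further impulse
pays off at `x + ξ`.
-/

section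

variable {E M : Type*} [AddSemigroup E] [AddCommSemigroup M] [Preorder M]
  [AddLeftStrictMono M] [AddLeftReflectLT M]
  {𝒦 : Set E} {ℓ V : E → M} {x ξ ζ : E}

theorem value_lt_value_add_cost_of_le_combined_impulse
    (hsub : ℓ (ξ + ζ) < ℓ ξ + ℓ ζ)
    (hle : V (x + ξ) + ℓ ξ ≤ V (x + (ξ + ζ)) + ℓ (ξ + ζ)) :
    V (x + ξ) < V (x + ξ + ζ) + ℓ ζ := by
  refine lt_of_add_lt_add_right (a := ℓ ξ) ?_
  calc
    V (x + ξ) + ℓ ξ ≤ V (x + (ξ + ζ)) + ℓ (ξ + ζ) := hle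
    _ < V (x + (ξ + ζ)) + (ℓ ξ + ℓ ζ) := by gcongr
    _ = V (x + ξ + ζ) + ℓ ζ + ℓ ξ := by rw [add_comm (ℓ ξ), ← add_assoc, ← add_assoc x]

theorem value_lt_intervention_after_optimal_impulse_general
    (hadd : ∀ a ∈ 𝒦, ∀ b ∈ 𝒦, a + b ∈ 𝒦)
    (hsub : ∀ a ∈ 𝒦, ∀ b ∈ 𝒦, ℓ (a + b) < ℓ a + ℓ b)
    (hξ : ξ ∈ 𝒦) (hopt : IsMinOn (fun η => V (x + η) + ℓ η) 𝒦 ξ)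
    {m : M} (hm : IsLeast ((fun η => V (x + ξ + η) + ℓ η) '' 𝒦) m) :
    V (x + ξ) < m := by
  obtain ⟨ζ, hζ, rfl⟩ := hm.1
  exact value_lt_value_add_cost_of_le_combined_impulse (hsub ξ hξ ζ hζ) (hopt (hadd ξ hξ ζ hζ))

end

/-- Proposition 3.2: if `V x = N[V] x` with the intervention infimum at `x`
attained at `ξ̂`, and the infimum defining `N[V] (x + ξ̂)` is attained, then
`V (x + ξ̂) < N[V] (x + ξ̂)`. -/
theorem value_lt_intervention_after_optimal_impulse
    {n : ℕ} (𝒦 : Set (Fin n → ℝ)) (h𝒦 : 𝒦.Nonempty)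
    (hadd : ∀ a ∈ 𝒦, ∀ b ∈ 𝒦, a + b ∈ 𝒦)
    (ℓ : (Fin n → ℝ) → ℝ)
    (hsub : ∀ ξ ∈ 𝒦, ∀ ξ' ∈ 𝒦, ℓ (ξ + ξ') < ℓ ξ + ℓ ξ')
    (V : (Fin n → ℝ) → ℝ)
    (N : (Fin n → ℝ) → ℝ)
    (hN : ∀ y, N y = sInf ((fun ξ => V (y + ξ) + ℓ ξ) '' 𝒦))
    (hbdd : ∀ y, BddBelow ((fun ξ => V (y + ξ) + ℓ ξ) '' 𝒦))
    (x : Fin n → ℝ) (ξhat : Fin n → ℝ) (hξhat : ξhat ∈ 𝒦)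
    (heq : V x = V (x + ξhat) + ℓ ξhat)
    (hopt : ∀ ζ ∈ 𝒦, V x ≤ V (x + ζ) + ℓ ζ)
    (ξtil : Fin n → ℝ) (hξtil : ξtil ∈ 𝒦)
    (hatt : N (x + ξhat) = V (x + ξhat + ξtil) + ℓ ξtil) :
    V (x + ξhat) < N (x + ξhat) := by
  have hmin : IsMinOn (fun ζ => V (x + ζ) + ℓ ζ) 𝒦 ξhat := fun ζ hζ => heq.ge.trans (hopt ζ hζ)
  exact value_lt_intervention_after_optimal_impulse_general hadd hsub hξhat hmin
    ⟨⟨ξtil, hξtil, hatt.symm⟩, fun _ hc => (hN _).trans_le (csInf_le (hbdd _) hc)⟩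
end

section
/- For every real constant c, the function x ↦ sin(eˣ) + c x² is not convex on ℝ. In particular, the bounded (hence linearly growing) function φ(x) = sin(eˣ) is not semi-convex: there is no constant K such that φ differs from a convex function by the quadratic K x². -/
/-!
If `f` is twice differentiable and `f + c x²` is convex, then `f'' ≥ -2c`. The second derivative of
`sin (exp x)` equals `-exp (2x)` wherever `sin (exp x) = 1`, which happens at arbitrarily large `x`,
so it is not bounded below.
-/

open Real Set Filter

lemma deriv2_nonneg_of_convexOn {S : Set ℝ} {f f' : ℝ → ℝ} {f'' x : ℝ}
    (hx : AccPt x (𝓟 S)) (hfc : ConvexOn ℝ S f) (hf : ∀ y ∈ S, HasDerivAt f (f' y) y)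
    (hf' : HasDerivWithinAt f' f'' S x) : 0 ≤ f'' := by
  have hmono : MonotoneOn f' S :=
    (hfc.monotoneOn_deriv fun y hy ↦ (hf y hy).differentiableAt).congr fun y hy ↦ (hf y hy).deriv
  exact hf'.nonneg_of_monotoneOn hx hmono

lemma neg_two_mul_le_deriv2_of_convexOn_add_mul_sq {S : Set ℝ} {f f' : ℝ → ℝ} {c f'' x : ℝ}
    (hx : AccPt x (𝓟 S)) (hfc : ConvexOn ℝ S fun y ↦ f y + c * y ^ 2)
    (hf : ∀ y ∈ S, HasDerivAt f (f' y) y) (hf' : HasDerivWithinAt f' f'' S x) :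
    -(2 * c) ≤ f'' := by
  have hderiv : ∀ y ∈ S, HasDerivAt (fun y ↦ f y + c * y ^ 2) (f' y + 2 * c * y) y :=
    fun y hy ↦ ((hf y hy).add ((hasDerivAt_pow 2 y).const_mul c)).congr_deriv (by ring)
  have hderiv₂ : HasDerivWithinAt (fun y ↦ f' y + 2 * c * y) (f'' + 2 * c) S x :=
    hf'.add (hasDerivAt_const_mul (2 * c)).hasDerivWithinAt
  linarith [deriv2_nonneg_of_convexOn hx hfc hderiv hderiv₂]

lemma hasDerivAt_sin_exp (x : ℝ) :
    HasDerivAt (fun x ↦ sin (exp x)) (cos (exp x) * exp x) x :=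
  (hasDerivAt_exp x).sin

lemma hasDerivAt_cos_exp_mul_exp (x : ℝ) :
    HasDerivAt (fun x ↦ cos (exp x) * exp x)
      (cos (exp x) * exp x - sin (exp x) * exp x ^ 2) x :=
  ((hasDerivAt_exp x).cos.mul (hasDerivAt_exp x)).congr_deriv (by ring)

lemma exists_gt_sin_eq_one (a : ℝ) : ∃ y > a, sin y = 1 := by
  obtain ⟨y, hy, hsin⟩ := sin_periodic.exists_mem_Ioc two_pi_pos (π / 2) a
  exact ⟨y, hy.1, hsin ▸ sin_pi_div_two⟩

lemma exists_deriv2_sin_exp_lt (b : ℝ) :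
    ∃ x, cos (exp x) * exp x - sin (exp x) * exp x ^ 2 < b := by
  obtain ⟨y, hy, hsin⟩ := exists_gt_sin_eq_one (max 1 (-b))
  obtain ⟨hy_one, hy_b⟩ := max_lt_iff.mp hy
  have hcos : cos y = 0 := cos_eq_zero_iff_sin_eq.mpr (.inl hsin)
  refine ⟨log y, ?_⟩
  rw [exp_log (one_pos.trans hy_one), hsin, hcos]
  nlinarith

/-- The bounded function `x ↦ sin (exp x)` is not semi-convex: for no constant
`c` is `x ↦ sin (exp x) + c x²` convex on `ℝ` (remark after Definition 2.1). -/
theorem sin_exp_not_semiconvex (c : ℝ) :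
    ¬ ConvexOn ℝ Set.univ (fun x : ℝ => Real.sin (Real.exp x) + c * x ^ 2) := by
  intro hconvex
  obtain ⟨x, hx⟩ := exists_deriv2_sin_exp_lt (-(2 * c))
  have hacc : AccPt x (𝓟 univ) := by simpa using PerfectSpace.univ_preperfect x (mem_univ x)
  exact hx.not_ge <| neg_two_mul_le_deriv2_of_convexOn_add_mul_sq hacc hconvex
    (fun y _ ↦ hasDerivAt_sin_exp y) (hasDerivAt_cos_exp_mul_exp x).hasDerivWithinAt
end
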